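/- arXiv:1211.5252 — 6 statements merged into one kernel-verified Lean document; each statement's English description precedes it below -/
import Mathlib

section
/- Leftover Hash Lemma: Let X, Z, S be finite sets, let F be a universal-2 hash family of functions from X to S, and let F be drawn uniformly from this family. Then for any sub-normalized non-negative function P_XZ on X × Z and any (normalized) probability distribution R_Z on Z whose support contains the support of the Z-marginal of P_XZ, the expected security satisfies E_F[d(F|P_XZ)] ≤ (1/2) · sqrt(|S| · e^{−H_2(P_XZ|R_Z)}). -/
/-!
Write `D i (s, z)` for the deviation of the key distribution of `H i` from uniform,
`keyDist (H i) P (s, z) - |S|⁻¹ * margZ P z`. Cauchy–Schwarz with weight `R z` bounds the square of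
the `ℓ¹` norm of `D` over all `(i, s, z)` by `|I| |S|` times `∑ D i (s, z) ^ 2 / R z`; the support
hypothesis guarantees that `D` vanishes wherever `R` does.

For fixed `z`, put `p x = P (x, z)`. Expanding the square gives
`∑ s, D i (s, z) ^ 2 = ∑ x x', p x * p x' * [H i x = H i x'] - |S|⁻¹ (∑ x, p x) ^ 2`
(`sum_sq_deviation`, with an Iverson bracket). Summed over `i`, universality bounds each off-diagonal collision count by
`|I| / |S|`; these terms are absorbed by the subtracted square, and only the diagonal
`|I| ∑ x, p x ^ 2` survives (`sum_sq_deviation_le`).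

Hence the expected security is at most `(1 / 2) √(|S| C)` with `C = ∑ P ^ 2 / R`, and
`C ≤ exp (log C) = exp (- H2cond P R)`, which holds even when `C = 0`.
-/

open Real Finset

/-- Variational distance `d(P,Q) = (1/2) ∑ |P a - Q a|`. -/
noncomputable def vdist {A : Type*} [Fintype A] (P Q : A → ℝ) : ℝ :=
  (1 / 2) * ∑ a, |P a - Q a|

/-- Sub-normalized non-negative function. -/
def Subnormalized {A : Type*} [Fintype A] (P : A → ℝ) : Prop :=
  (∀ a, 0 ≤ P a) ∧ ∑ a, P a ≤ 1

/-- Probability distribution on a finite set. -/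
def IsDist {A : Type*} [Fintype A] (P : A → ℝ) : Prop :=
  (∀ a, 0 ≤ P a) ∧ ∑ a, P a = 1

/-- Z-marginal `P_Z(z) = ∑_x P(x,z)`. -/
noncomputable def margZ {X Z : Type*} [Fintype X] (P : X × Z → ℝ) : Z → ℝ :=
  fun z => ∑ x, P (x, z)

/-- Key distribution `P_SZ(s,z) = ∑_{x ∈ f⁻¹(s)} P(x,z)`. -/
noncomputable def keyDist {X Z S : Type*} [Fintype X] [DecidableEq S]
    (f : X → S) (P : X × Z → ℝ) : S × Z → ℝ :=
  fun sz => ∑ x, if f x = sz.1 then P (x, sz.2) else 0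

/-- Security `d(f|P_XZ) = d(P_SZ, P_unif × P_Z)`. -/
noncomputable def security {X Z S : Type*} [Fintype X] [Fintype Z] [Fintype S] [DecidableEq S]
    (f : X → S) (P : X × Z → ℝ) : ℝ :=
  vdist (keyDist f P) (fun sz => (Fintype.card S : ℝ)⁻¹ * margZ P sz.2)

/-- Universal-2 hash family indexed by `I`: for `x ≠ x'`,
`Pr[F(x) = F(x')] ≤ 1/|S|` where `F` is uniform on `I`. -/
def Universal2 {I X S : Type*} [Fintype I] [Fintype S] [DecidableEq S]
    (H : I → X → S) : Prop :=
  ∀ x x' : X, x ≠ x' →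
    ((Finset.univ.filter fun i => H i x = H i x').card : ℝ) / (Fintype.card I : ℝ)
      ≤ 1 / (Fintype.card S : ℝ)

/-- Expectation of the security over the uniformly random hash function. -/
noncomputable def expSecurity {I X Z S : Type*} [Fintype I] [Fintype X] [Fintype Z]
    [Fintype S] [DecidableEq S] (H : I → X → S) (P : X × Z → ℝ) : ℝ :=
  (Fintype.card I : ℝ)⁻¹ * ∑ i, security (H i) P

/-- Conditional Rényi entropy of order 2 relative to `R`:
`H_2(P|R) = -log ∑_{x, z ∈ supp R} P(x,z)² / R(z)`. -/
noncomputable def H2cond {X Z : Type*} [Fintype X] [Fintype Z]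
    (P : X × Z → ℝ) (R : Z → ℝ) : ℝ :=
  - Real.log (∑ xz : X × Z, if R xz.2 ≠ 0 then P xz ^ 2 / R xz.2 else 0)

/-- Conditional min-entropy relative to `R`:
`H_min(P|R) = -log max_{x, z ∈ supp R} P(x,z)/R(z)`. -/
noncomputable def Hmin {X Z : Type*} (P : X × Z → ℝ) (R : Z → ℝ) : ℝ :=
  - Real.log (sSup {v : ℝ | ∃ x z, R z ≠ 0 ∧ v = P (x, z) / R z})

/-- Smooth min-entropy over sub-normalized functions. -/
noncomputable def barHminEps {X Z : Type*} [Fintype X] [Fintype Z] (ε : ℝ)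
    (P : X × Z → ℝ) (R : Z → ℝ) : ℝ :=
  sSup {h : ℝ | ∃ Q : X × Z → ℝ, Subnormalized Q ∧ vdist P Q ≤ ε ∧ h = Hmin Q R}

/-- Smooth min-entropy over normalized distributions. -/
noncomputable def HminEps {X Z : Type*} [Fintype X] [Fintype Z] (ε : ℝ)
    (P : X × Z → ℝ) (R : Z → ℝ) : ℝ :=
  sSup {h : ℝ | ∃ Q : X × Z → ℝ, IsDist Q ∧ vdist P Q ≤ ε ∧ h = Hmin Q R}

/-- Conditional inf-spectral entropy
`H_s^ε(P|R) = sup{r : P{(x,z) : -log(P(x,z)/R(z)) ≤ r} ≤ ε}`. -/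
noncomputable def Hspec {X Z : Type*} [Fintype X] [Fintype Z] (ε : ℝ)
    (P : X × Z → ℝ) (R : Z → ℝ) : ℝ :=
  sSup {r : ℝ |
    (∑ xz : X × Z, if - Real.log (P xz / R xz.2) ≤ r then P xz else 0) ≤ ε}

/-- Maximal key length `ℓ(P,ε) = sup{log|S| : ∃ f : X → S, d(f|P) ≤ ε}`. -/
noncomputable def keyLen {X Z : Type*} [Fintype X] [Fintype Z]
    (P : X × Z → ℝ) (ε : ℝ) : ℝ :=
  sSup {l : ℝ | ∃ m : ℕ, 0 < m ∧ l = Real.log m ∧ ∃ f : X → Fin m, security f P ≤ ε}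

/-- `φ(ρ|P) = log ∑_{z ∈ supp P_Z} P_Z(z) (∑_x P_{X|Z}(x|z)^{1/(1-ρ)})^{1-ρ}`. -/
noncomputable def phi {X Z : Type*} [Fintype X] [Fintype Z] (ρ : ℝ) (P : X × Z → ℝ) : ℝ :=
  Real.log (∑ z, if margZ P z ≠ 0 then
    margZ P z * (∑ x, (P (x, z) / margZ P z) ^ ((1 : ℝ) / (1 - ρ))) ^ (1 - ρ) else 0)

/-- Conditional Rényi entropy of order `1+θ` relative to `R`:
`H_{1+θ}(P|R) = -(1/θ) log ∑_{x, z ∈ supp R} R(z) (P(x,z)/R(z))^{1+θ}`. -/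
noncomputable def Hrenyi {X Z : Type*} [Fintype X] [Fintype Z] (θ : ℝ)
    (P : X × Z → ℝ) (R : Z → ℝ) : ℝ :=
  -(1 / θ) * Real.log (∑ xz : X × Z,
    if R xz.2 ≠ 0 then R xz.2 * (P xz / R xz.2) ^ (1 + θ) else 0)

/-- The squared `ℓ²` distance from uniform is the collision sum minus `|S|⁻¹` times the squared
total mass. No nonemptiness of `S` is needed, since `0⁻¹ = 0`. -/
lemma sum_sq_deviation {X S : Type*} [Fintype X] [Fintype S] [DecidableEq S]
    (f : X → S) (p : X → ℝ) :
    ∑ s, ((∑ x, if f x = s then p x else 0) - (Fintype.card S : ℝ)⁻¹ * ∑ x, p x) ^ 2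
      = (∑ x, ∑ y, if f x = f y then p x * p y else 0)
        - (Fintype.card S : ℝ)⁻¹ * (∑ x, p x) ^ 2 := by
  have h1 : ∑ s, (∑ x, if f x = s then p x else 0) = ∑ x, p x := by
    rw [Finset.sum_comm]
    simp
  have h2 : ∑ s, (∑ x, if f x = s then p x else 0) ^ 2
      = ∑ x, ∑ y, if f x = f y then p x * p y else 0 := by
    simp_rw [sq, Finset.sum_mul_sum]
    rw [Finset.sum_comm]
    refine Finset.sum_congr rfl fun x _ => ?_
    rw [Finset.sum_comm]
    refine Finset.sum_congr rfl fun y _ => ?_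
    simp [ite_mul, eq_comm]
  have h3 : (Fintype.card S : ℝ) * ((Fintype.card S : ℝ)⁻¹) ^ 2 = (Fintype.card S : ℝ)⁻¹ := by
    rcases eq_or_ne (Fintype.card S : ℝ) 0 with h | h
    · simp [h]
    · field_simp
  simp_rw [sub_sq, Finset.sum_add_distrib, Finset.sum_sub_distrib, h2, ← Finset.sum_mul,
    ← Finset.mul_sum, h1, Finset.sum_const, Finset.card_univ, nsmul_eq_mul]
  linear_combination (∑ x, p x) ^ 2 * h3

lemma sum_sq_deviation_le {I X S : Type*} [Fintype I] [Nonempty I] [Fintype X]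
    [Fintype S] [DecidableEq S] (H : I → X → S) (hH : Universal2 H)
    (p : X → ℝ) (hp : ∀ x, 0 ≤ p x) :
    ∑ i, ∑ s, ((∑ x, if H i x = s then p x else 0)
        - (Fintype.card S : ℝ)⁻¹ * ∑ x, p x) ^ 2
      ≤ (Fintype.card I : ℝ) * ∑ x, p x ^ 2 := by
  classical
  have hI : (0 : ℝ) < Fintype.card I := by exact_mod_cast Fintype.card_pos
  -- The universality bound, extended to the diagonal, where the collision count is `|I|`.
  have hN : ∀ x y, ((Finset.univ.filter fun i => H i x = H i y).card : ℝ)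
      ≤ (Fintype.card I : ℝ) * ((Fintype.card S : ℝ)⁻¹ + if x = y then 1 else 0) := by
    intro x y
    by_cases h : x = y
    · subst h
      simp only [Finset.filter_true, Finset.card_univ, if_true]
      have : (0 : ℝ) ≤ (Fintype.card S : ℝ)⁻¹ := by positivity
      nlinarith
    · have := hH x y h
      rw [div_le_iff₀ hI, one_div] at this
      simp only [h, if_false, add_zero]
      linarith
  have hc : ∑ i, ∑ x, ∑ y, (if H i x = H i y then p x * p y else 0)
      ≤ ∑ x, ∑ y, ((Fintype.card I : ℝ)
          * ((Fintype.card S : ℝ)⁻¹ + if x = y then 1 else 0)) * (p x * p y) := by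
    rw [Finset.sum_comm]
    refine Finset.sum_le_sum fun x _ => ?_
    rw [Finset.sum_comm]
    refine Finset.sum_le_sum fun y _ => ?_
    rw [← Finset.sum_filter, Finset.sum_const, nsmul_eq_mul]
    exact mul_le_mul_of_nonneg_right (hN x y) (mul_nonneg (hp x) (hp y))
  have he : ∑ x, ∑ y, ((Fintype.card I : ℝ)
          * ((Fintype.card S : ℝ)⁻¹ + if x = y then 1 else 0)) * (p x * p y)
      = (Fintype.card I : ℝ) * ((Fintype.card S : ℝ)⁻¹ * (∑ x, p x) ^ 2 + ∑ x, p x ^ 2) := by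
    simp_rw [mul_assoc, add_mul, ← Finset.mul_sum, Finset.sum_add_distrib, ← Finset.mul_sum]
    simp [sq, Finset.sum_mul]
  simp_rw [sum_sq_deviation, Finset.sum_sub_distrib, Finset.sum_const, Finset.card_univ,
    nsmul_eq_mul]
  linarith

/-- Leftover Hash Lemma. -/
theorem leftover_hash {I X Z S : Type*} [Fintype I] [Nonempty I] [Fintype X] [Fintype Z]
    [Fintype S] [DecidableEq S]
    (H : I → X → S) (hH : Universal2 H)
    (P : X × Z → ℝ) (hP : Subnormalized P)
    (R : Z → ℝ) (hR : IsDist R)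
    (hsupp : ∀ z, margZ P z ≠ 0 → R z ≠ 0) :
    expSecurity H P ≤
      (1 / 2) * Real.sqrt ((Fintype.card S : ℝ) * Real.exp (- H2cond P R)) := by
  obtain ⟨hP0, -⟩ := hP
  obtain ⟨hR0, hR1⟩ := hR
  have hI : (0 : ℝ) < Fintype.card I := by exact_mod_cast Fintype.card_pos
  -- The condition `R z ≠ 0` may be dropped, since `a / 0 = 0`.
  have hC : ∑ z, (∑ x, P (x, z) ^ 2) / R z ≤ Real.exp (- H2cond P R) := by
    rw [H2cond, neg_neg]
    refine le_trans (le_of_eq ?_) (Real.le_exp_log _)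
    rw [Fintype.sum_prod_type_right]
    refine Finset.sum_congr rfl fun z _ => ?_
    by_cases h : R z = 0 <;> simp [h, Finset.sum_div]
  set D : I → S × Z → ℝ := fun i sz =>
    keyDist (H i) P sz - (Fintype.card S : ℝ)⁻¹ * margZ P sz.2 with hD
  have hD0 : ∀ i s z, R z = 0 → D i (s, z) = 0 := by
    intro i s z hz
    have hm : margZ P z = 0 := by
      by_contra h
      exact hsupp z h hz
    have hx : ∀ x, P (x, z) = 0 := fun x =>
      (Finset.sum_eq_zero_iff_of_nonneg fun x _ => hP0 (x, z)).1 hm x (Finset.mem_univ x)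
    simp [hD, keyDist, hm, hx]
  have hCS : (∑ j : I × S × Z, |D j.1 j.2|) ^ 2
      ≤ (∑ j : I × S × Z, R j.2.2) * ∑ j : I × S × Z, D j.1 j.2 ^ 2 / R j.2.2 := by
    refine Finset.sum_sq_le_sum_mul_sum_of_sq_le_mul _ (fun j _ => hR0 _)
      (fun j _ => div_nonneg (sq_nonneg _) (hR0 _)) fun j _ => le_of_eq ?_
    rw [sq_abs]
    by_cases h : R j.2.2 = 0
    · simp [h, hD0 j.1 j.2.1 j.2.2 h]
    · field_simp
  have hRs : ∑ j : I × S × Z, R j.2.2 = (Fintype.card I : ℝ) * Fintype.card S := by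
    simp [Fintype.sum_prod_type, hR1]
  have hDs : ∑ j : I × S × Z, D j.1 j.2 ^ 2 / R j.2.2
      ≤ (Fintype.card I : ℝ) * Real.exp (- H2cond P R) := by
    calc ∑ j : I × S × Z, D j.1 j.2 ^ 2 / R j.2.2
        = ∑ z, (∑ i, ∑ s, D i (s, z) ^ 2) / R z := by
          simp_rw [Fintype.sum_prod_type, Finset.sum_div]
          exact (Finset.sum_congr rfl fun i _ => Finset.sum_comm).trans Finset.sum_comm
      _ ≤ ∑ z, ((Fintype.card I : ℝ) * ∑ x, P (x, z) ^ 2) / R z :=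
          Finset.sum_le_sum fun z _ => div_le_div_of_nonneg_right
            (sum_sq_deviation_le H hH (fun x => P (x, z)) fun x => hP0 (x, z)) (hR0 z)
      _ = (Fintype.card I : ℝ) * ∑ z, (∑ x, P (x, z) ^ 2) / R z := by
          simp_rw [mul_div_assoc, Finset.mul_sum]
      _ ≤ _ := mul_le_mul_of_nonneg_left hC hI.le
  have hE : expSecurity H P
      = (1 / 2) * ((∑ j : I × S × Z, |D j.1 j.2|) / Fintype.card I) := by
    simp only [expSecurity, security, vdist, hD]
    rw [← Finset.mul_sum, Fintype.sum_prod_type]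
    ring
  rw [hE]
  refine mul_le_mul_of_nonneg_left (Real.le_sqrt_of_sq_le ?_) (by norm_num)
  rw [div_pow, div_le_iff₀ (by positivity)]
  rw [hRs] at hCS
  calc _ ≤ _ := hCS
    _ ≤ (Fintype.card I : ℝ) * Fintype.card S
          * ((Fintype.card I : ℝ) * Real.exp (- H2cond P R)) :=
        mul_le_mul_of_nonneg_left hDs (by positivity)
    _ = _ := by ring
end

section
/- Smooth min-entropy dominates inf-spectral entropy (Lemma 3): Let X and Z be finite sets, P_XZ a probability distribution on X × Z, R_Z a probability distribution on Z whose support contains the support of P_Z, and 0 ≤ ε ≤ 1. Then H̄_min^{ε/2}(P_XZ|R_Z) ≥ H_s^ε(P_XZ|R_Z). -/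
/-!
For `ε < 1` and an admissible threshold `r`, truncate: let `Q` agree with `P` on
`{-log (P/R) > r}` and vanish elsewhere. The removed mass is at most `ε`, so `vdist P Q ≤ ε / 2`,
and `Q/R ≤ exp (-r)` pointwise, so `Hmin Q R ≥ r` (`le_Hmin`).

Since `Hspec` and `barHminEps` are real suprema, boundedness matters too. A competitor `Q` with
`vdist P Q ≤ ε / 2` keeps mass at least `1 - ε > 0` on the support of `R`
(`mass_lower`), hence some ratio `Q/R` there is at least `(1 - ε) / |X|`
(`mass_le_card_mul_sSup`); this bounds `Hmin Q R` above and makes the logarithm of the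
maximal ratio genuine.

For `ε = 1` every real threshold is admissible, so `Hspec` is the supremum of an unbounded set,
which is `0` by convention. The competitor `Q = 0` has `Hmin Q R = -log 0 = 0`, so
`barHminEps` is nonnegative, again using that convention when its set is unbounded.
-/

open Real Finset

section SmoothMinEntropy

variable {X Z : Type*} [Fintype X] [Fintype Z]

/-- The set of ratios in the definition of `Hmin` is finite. -/
lemma ratios_bddAbove (Q : X × Z → ℝ) (R : Z → ℝ) :
    BddAbove {v : ℝ | ∃ x z, R z ≠ 0 ∧ v = Q (x, z) / R z} := by
  refine ((Set.finite_range fun xz : X × Z => Q xz / R xz.2).subset ?_).bddAbove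
  rintro v ⟨x, z, -, rfl⟩
  exact ⟨(x, z), rfl⟩

/-- The mass of `Q` on the support of `R` is at most `|X|` times the maximal ratio `Q/R`. -/
lemma mass_le_card_mul_sSup (Q : X × Z → ℝ) (R : Z → ℝ) (hR : IsDist R) :
    (∑ xz : X × Z, if R xz.2 ≠ 0 then Q xz else 0)
      ≤ Fintype.card X * sSup {v : ℝ | ∃ x z, R z ≠ 0 ∧ v = Q (x, z) / R z} := by
  set M := sSup {v : ℝ | ∃ x z, R z ≠ 0 ∧ v = Q (x, z) / R z} with hM
  have h : ∀ xz : X × Z, (if R xz.2 ≠ 0 then Q xz else 0) ≤ M * R xz.2 := by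
    rintro ⟨x, z⟩
    by_cases hz : R z = 0
    · simp [hz]
    · have hpos : 0 < R z := lt_of_le_of_ne (hR.1 z) (Ne.symm hz)
      have : Q (x, z) / R z ≤ M := le_csSup (ratios_bddAbove Q R) ⟨x, z, hz, rfl⟩
      simpa [hz] using (div_le_iff₀ hpos).1 this
  calc _ ≤ ∑ xz : X × Z, M * R xz.2 := Finset.sum_le_sum fun xz _ => h xz
    _ = Fintype.card X * M := by
      rw [← Finset.mul_sum, Fintype.sum_prod_type]
      simp [hR.2, mul_comm]

lemma eq_zero_of_R_eq_zero {P : X × Z → ℝ} (hP : IsDist P) {R : Z → ℝ}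
    (hsupp : ∀ z, margZ P z ≠ 0 → R z ≠ 0) (xz : X × Z) (h : R xz.2 = 0) : P xz = 0 := by
  have h0 : margZ P xz.2 = 0 := by
    by_contra hne
    exact hsupp _ hne h
  exact (Finset.sum_eq_zero_iff_of_nonneg fun x _ => hP.1 (x, xz.2)).1 h0 xz.1
    (Finset.mem_univ _)

/-- A function close to `P` in variational distance keeps mass on the support of `R`, since that
support carries all of `P`. -/
lemma mass_lower {P Q : X × Z → ℝ} (hP : IsDist P) {R : Z → ℝ}
    (hsupp : ∀ z, margZ P z ≠ 0 → R z ≠ 0) {ε : ℝ} (hd : vdist P Q ≤ ε / 2) :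
    1 - ε ≤ ∑ xz : X × Z, if R xz.2 ≠ 0 then Q xz else 0 := by
  have h : ∀ xz : X × Z, P xz ≤ |P xz - Q xz| + if R xz.2 ≠ 0 then Q xz else 0 := by
    intro xz
    by_cases hz : R xz.2 = 0
    · simp [hz, eq_zero_of_R_eq_zero hP hsupp xz hz]
    · have := le_abs_self (P xz - Q xz)
      simp only [ne_eq, hz, not_false_eq_true, if_true]
      linarith
  have hs := Finset.sum_le_sum fun xz (_ : xz ∈ Finset.univ) => h xz
  rw [Finset.sum_add_distrib, hP.2] at hs
  unfold vdist at hd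
  linarith

end SmoothMinEntropy

/-- The logarithm in `Hmin Q R` is monotone here because the maximal ratio is positive. -/
lemma le_Hmin {X Z : Type*} {Q : X × Z → ℝ} {R : Z → ℝ} {r : ℝ}
    (hpos : 0 < sSup {v : ℝ | ∃ x z, R z ≠ 0 ∧ v = Q (x, z) / R z})
    (h : ∀ x z, R z ≠ 0 → Q (x, z) / R z ≤ Real.exp (-r)) : r ≤ Hmin Q R := by
  have hle : sSup {v : ℝ | ∃ x z, R z ≠ 0 ∧ v = Q (x, z) / R z} ≤ Real.exp (-r) := by
    refine Real.sSup_le ?_ (Real.exp_pos _).le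
    rintro v ⟨x, z, hz, rfl⟩
    exact h x z hz
  have := Real.log_le_log hpos hle
  rw [Real.log_exp] at this
  unfold Hmin
  linarith

/-- Smooth min-entropy dominates inf-spectral entropy (Lemma 3). -/
theorem smooth_min_entropy_ge_spectral {X Z : Type*} [Fintype X] [Fintype Z]
    (P : X × Z → ℝ) (hP : IsDist P)
    (R : Z → ℝ) (hR : IsDist R)
    (hsupp : ∀ z, margZ P z ≠ 0 → R z ≠ 0)
    (ε : ℝ) (hε0 : 0 ≤ ε) (hε1 : ε ≤ 1) :
    Hspec ε P R ≤ barHminEps (ε / 2) P R := by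
  rcases hε1.eq_or_lt with rfl | hlt
  · have hL : Hspec 1 P R = 0 := by
      unfold Hspec
      convert Real.sSup_univ
      refine Set.eq_univ_of_forall fun r => ?_
      refine (Finset.sum_le_sum fun xz _ => ?_).trans hP.2.le
      split_ifs
      · exact le_rfl
      · exact hP.1 xz
    rw [hL]
    unfold barHminEps
    by_cases hb : BddAbove {h : ℝ | ∃ Q : X × Z → ℝ,
        Subnormalized Q ∧ vdist P Q ≤ 1 / 2 ∧ h = Hmin Q R}
    · refine le_csSup hb ⟨0, ⟨fun _ => le_rfl, by simp⟩, ?_, ?_⟩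
      · simp [vdist, abs_of_nonneg (hP.1 _), hP.2]
      · have h0 : sSup {v : ℝ | ∃ x z, R z ≠ 0 ∧ v = (0 : X × Z → ℝ) (x, z) / R z} = 0 := by
          apply le_antisymm
          · refine Real.sSup_le ?_ le_rfl
            rintro v ⟨x, z, -, rfl⟩
            simp
          · refine Real.sSup_nonneg ?_
            rintro v ⟨x, z, -, rfl⟩
            simp
        simp only [Hmin, h0, Real.log_zero, neg_zero]
    · rw [Real.sSup_of_not_bddAbove hb]
  · have hcard : (0 : ℝ) < Fintype.card X := by
      rcases isEmpty_or_nonempty X with h | h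
      · have := hP.2
        simp at this
      · exact_mod_cast Fintype.card_pos
    have hM : ∀ Q : X × Z → ℝ, vdist P Q ≤ ε / 2 → (1 - ε) / Fintype.card X
        ≤ sSup {v : ℝ | ∃ x z, R z ≠ 0 ∧ v = Q (x, z) / R z} := fun Q hd => by
      rw [div_le_iff₀' hcard]
      exact (mass_lower hP hsupp hd).trans (mass_le_card_mul_sSup Q R hR)
    have hc : 0 < (1 - ε) / Fintype.card X := div_pos (by linarith) hcard
    have hb : BddAbove {h : ℝ | ∃ Q : X × Z → ℝ,
        Subnormalized Q ∧ vdist P Q ≤ ε / 2 ∧ h = Hmin Q R} := by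
      refine ⟨-Real.log ((1 - ε) / Fintype.card X), ?_⟩
      rintro h ⟨Q, -, hd, rfl⟩
      exact neg_le_neg (Real.log_le_log hc (hM Q hd))
    unfold Hspec barHminEps
    refine csSup_le ?_ ?_
    · -- A threshold below all the finitely many values of `-log (P/R)` removes no mass.
      obtain ⟨b, hbd⟩ :=
        (Set.finite_range fun xz : X × Z => -Real.log (P xz / R xz.2)).bddBelow
      refine ⟨b - 1, ?_⟩
      refine (Finset.sum_eq_zero fun xz _ => ?_).trans_le hε0
      have : b ≤ -Real.log (P xz / R xz.2) := hbd ⟨xz, rfl⟩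
      exact if_neg (by linarith)
    · intro r hr
      set Q : X × Z → ℝ := fun xz => if -Real.log (P xz / R xz.2) ≤ r then 0 else P xz with hQ
      have hd : vdist P Q ≤ ε / 2 := by
        have he : ∀ xz, |P xz - Q xz|
            = if -Real.log (P xz / R xz.2) ≤ r then P xz else 0 := by
          intro xz
          simp only [hQ]
          split_ifs
          · simpa using hP.1 xz
          · simp
        have hr' : (∑ xz : X × Z, if -Real.log (P xz / R xz.2) ≤ r then P xz else 0) ≤ ε := hr
        unfold vdist
        rw [Finset.sum_congr rfl fun xz _ => he xz]
        linarith
      have hsub : Subnormalized Q := by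
        refine ⟨fun xz => ?_, (Finset.sum_le_sum fun xz _ => ?_).trans hP.2.le⟩
        · simp only [hQ]
          split_ifs
          · exact le_rfl
          · exact hP.1 xz
        · simp only [hQ]
          split_ifs
          · exact hP.1 xz
          · exact le_rfl
      refine le_trans ?_ (le_csSup hb ⟨Q, hsub, hd, rfl⟩)
      refine le_Hmin (hc.trans_le (hM Q hd)) fun x z hz => ?_
      simp only [hQ]
      split_ifs with hle
      · simpa using (Real.exp_pos _).le
      · rcases (div_nonneg (hP.1 (x, z)) (hR.1 z)).eq_or_lt with h0 | h0
        · rw [← h0]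
          exact (Real.exp_pos _).le
        · exact ((Real.log_lt_iff_lt_exp h0).1 (by linarith)).le
end

section
/- Exponential bound (Theorem 4): Let X, Z, S be finite sets, let F be a universal-2 hash family of functions from X to S with F drawn uniformly, and let P_XZ be a probability distribution on X × Z. Then for any 0 < ρ ≤ 1/2, E_F[d(F|P_XZ)] ≤ (3/2) · |S|^ρ · e^{φ(ρ|P_XZ)}. -/
/-!
Both sides decompose over `z`, so everything reduces to a bound for a nonnegative function
`g` on `X` (namely `g = P (·, z)`). Write `M = |S|` and let `D f g` be the `ℓ¹` distance between the
push-forward of `g` along `f` and the uniform function with the same total mass. With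
`q = 1 / (1 - ρ) ∈ (1, 2]` the claim is `E_F D F g ≤ 3 M^ρ (∑ g^q)^(1-ρ)`.

This interpolates between two endpoint estimates: `D f g ≤ 2 ∑ g` (triangle inequality, `hashDev_le`)
and `E_F D F g ≤ √(M ∑ g²)` (leftover hash lemma, `avg_hashDev_le`: Cauchy–Schwarz together with the
universal-2 bound on the collision probability). Since `D f` is subadditive, `g` may be split into its
parts above and below the threshold `c = (A / M)^(1-ρ)`, where `A = ∑ g^q`. The first estimate
for the large part and the second one for the small part then give `2 M^ρ A^(1-ρ)` and
`M^ρ A^(1-ρ)` respectively.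
-/

open Real Finset

/-! ### Deviation of a push-forward from uniform -/

/-- The `ℓ¹` distance between the push-forward of `g` along `f` and the uniform function on `S`
with total mass `∑ x, g x`. -/
noncomputable def hashDev {X S : Type*} [Fintype X] [Fintype S] [DecidableEq S]
    (f : X → S) (g : X → ℝ) : ℝ :=
  ∑ s, |(∑ x, if f x = s then g x else 0) - (Fintype.card S : ℝ)⁻¹ * ∑ x, g x|

section
variable {I X S : Type*} [Fintype I] [Fintype X] [Fintype S] [DecidableEq S]

lemma sum_fiber (f : X → S) (g : X → ℝ) :
    ∑ s, (∑ x, if f x = s then g x else 0) = ∑ x, g x := by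
  rw [Finset.sum_comm]
  simp

lemma hashDev_add (f : X → S) (g h : X → ℝ) :
    hashDev f (fun x => g x + h x) ≤ hashDev f g + hashDev f h := by
  unfold hashDev
  rw [← Finset.sum_add_distrib]
  refine Finset.sum_le_sum fun s _ => ?_
  refine le_trans (le_of_eq ?_) (abs_add_le _ _)
  congr 1
  have : (∑ x, if f x = s then g x + h x else 0)
      = (∑ x, if f x = s then g x else 0) + ∑ x, if f x = s then h x else 0 := by
    rw [← Finset.sum_add_distrib]
    refine Finset.sum_congr rfl fun x _ => ?_
    split_ifs <;> simp
  rw [this, Finset.sum_add_distrib]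
  ring

lemma hashDev_le (f : X → S) (g : X → ℝ) (hg : ∀ x, 0 ≤ g x) (hM : 0 < Fintype.card S) :
    hashDev f g ≤ 2 * ∑ x, g x := by
  have hM' : (Fintype.card S : ℝ) ≠ 0 := by positivity
  have hG : 0 ≤ ∑ x, g x := Finset.sum_nonneg fun x _ => hg x
  calc hashDev f g
      ≤ ∑ s, ((∑ x, if f x = s then g x else 0) + (Fintype.card S : ℝ)⁻¹ * ∑ x, g x) := by
        refine Finset.sum_le_sum fun s _ => ?_
        have h1 : 0 ≤ ∑ x, if f x = s then g x else 0 :=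
          Finset.sum_nonneg fun x _ => by split_ifs; exacts [hg x, le_rfl]
        have h2 : 0 ≤ (Fintype.card S : ℝ)⁻¹ * ∑ x, g x := by positivity
        rw [abs_le]
        constructor <;> linarith
    _ = 2 * ∑ x, g x := by
        rw [Finset.sum_add_distrib, sum_fiber, Finset.sum_const, Finset.card_univ, nsmul_eq_mul]
        field_simp
        ring

/-! ### The second-moment estimate for universal-2 families -/

lemma sum_fiber_sq (f : X → S) (g : X → ℝ) :
    ∑ s, (∑ x, if f x = s then g x else 0) ^ 2
      = ∑ x, ∑ y, if f x = f y then g x * g y else 0 := by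
  simp_rw [sq, Finset.sum_mul_sum]
  rw [Finset.sum_comm]
  refine Finset.sum_congr rfl fun x _ => ?_
  rw [Finset.sum_comm]
  refine Finset.sum_congr rfl fun y _ => ?_
  rw [Finset.sum_eq_single (f x)]
  · by_cases h : f x = f y <;> simp [h, eq_comm]
  · intro s _ hs
    simp [Ne.symm hs]
  · simp

lemma sum_dev_sq (f : X → S) (g : X → ℝ) (hM : 0 < Fintype.card S) :
    ∑ s, ((∑ x, if f x = s then g x else 0) - (Fintype.card S : ℝ)⁻¹ * ∑ x, g x) ^ 2
      = (∑ x, ∑ y, if f x = f y then g x * g y else 0)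
        - (Fintype.card S : ℝ)⁻¹ * (∑ x, g x) ^ 2 := by
  have hM' : (Fintype.card S : ℝ) ≠ 0 := by positivity
  rw [← sum_fiber_sq]
  simp_rw [sub_sq]
  rw [Finset.sum_add_distrib, Finset.sum_sub_distrib, ← Finset.sum_mul, ← Finset.mul_sum,
    sum_fiber, Finset.sum_const, Finset.card_univ, nsmul_eq_mul]
  field_simp
  ring

/-- The expected collision mass of a universal-2 family: the diagonal contributes `∑ g²`, and each
off-diagonal pair is counted with probability at most `1 / |S|`. -/
lemma avg_collision_le [Nonempty I] (H : I → X → S) (hH : Universal2 H) (g : X → ℝ)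
    (hg : ∀ x, 0 ≤ g x) :
    (Fintype.card I : ℝ)⁻¹ * ∑ i, (∑ x, ∑ y, if H i x = H i y then g x * g y else 0)
      ≤ ∑ x, g x ^ 2 + (Fintype.card S : ℝ)⁻¹ * (∑ x, g x) ^ 2 := by
  classical
  have hI : (Fintype.card I : ℝ) ≠ 0 := by
    have : 0 < Fintype.card I := Fintype.card_pos
    positivity
  have key : ∀ x y, (Fintype.card I : ℝ)⁻¹ * ∑ i, (if H i x = H i y then g x * g y else 0)
      ≤ (if x = y then g x ^ 2 else 0) + (Fintype.card S : ℝ)⁻¹ * (g x * g y) := by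
    intro x y
    have hxy : 0 ≤ g x * g y := mul_nonneg (hg x) (hg y)
    by_cases h : x = y
    · subst h
      have : 0 ≤ (Fintype.card S : ℝ)⁻¹ * (g x * g x) := by positivity
      simp only [if_true, Finset.sum_const, Finset.card_univ, nsmul_eq_mul]
      rw [inv_mul_cancel_left₀ hI]
      linarith [sq (g x)]
    · have h1 := hH x y h
      rw [← Finset.sum_filter, Finset.sum_const, nsmul_eq_mul, if_neg h, zero_add, ← mul_assoc]
      refine mul_le_mul_of_nonneg_right ?_ hxy
      rw [div_eq_inv_mul, one_div] at h1
      exact h1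
  have hswap : ∑ i, (∑ x, ∑ y, if H i x = H i y then g x * g y else 0)
      = ∑ x, ∑ y, ∑ i, if H i x = H i y then g x * g y else 0 := by
    rw [Finset.sum_comm]
    refine Finset.sum_congr rfl fun x _ => ?_
    rw [Finset.sum_comm]
  rw [hswap, Finset.mul_sum]
  simp_rw [Finset.mul_sum]
  calc _ ≤ ∑ x, ∑ y, ((if x = y then g x ^ 2 else 0) + (Fintype.card S : ℝ)⁻¹ * (g x * g y)) := by
        refine Finset.sum_le_sum fun x _ => Finset.sum_le_sum fun y _ => ?_
        have := key x y
        rwa [Finset.mul_sum] at this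
    _ = _ := by
        simp_rw [Finset.sum_add_distrib, ← Finset.mul_sum, ← Finset.sum_mul]
        simp [sq]

/-- Leftover hash lemma: the average deviation is controlled by the collision mass `∑ g²`,
by Cauchy–Schwarz over both the hash index and the key. -/
lemma avg_hashDev_le [Nonempty I] (H : I → X → S) (hH : Universal2 H) (g : X → ℝ)
    (hg : ∀ x, 0 ≤ g x) (hM : 0 < Fintype.card S) :
    (Fintype.card I : ℝ)⁻¹ * ∑ i, hashDev (H i) g ≤ √(Fintype.card S * ∑ x, g x ^ 2) := by
  have hI : 0 < (Fintype.card I : ℝ) := by exact_mod_cast Fintype.card_pos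
  have hM' : 0 < (Fintype.card S : ℝ) := by exact_mod_cast hM
  apply Real.le_sqrt_of_sq_le
  have h1 : (∑ i, hashDev (H i) g) ^ 2 ≤ Fintype.card I * ∑ i, (hashDev (H i) g) ^ 2 := by
    simpa using sq_sum_le_card_mul_sum_sq (s := Finset.univ) (f := fun i => hashDev (H i) g)
  have h2 : ∀ i, (hashDev (H i) g) ^ 2 ≤ Fintype.card S *
      ((∑ x, ∑ y, if H i x = H i y then g x * g y else 0)
        - (Fintype.card S : ℝ)⁻¹ * (∑ x, g x) ^ 2) := by
    intro i
    rw [← sum_dev_sq (H i) g hM]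
    unfold hashDev
    refine (sq_sum_le_card_mul_sum_sq (s := Finset.univ)).trans (le_of_eq ?_)
    simp only [sq_abs, Finset.card_univ]
  have h3 := avg_collision_le H hH g hg
  calc ((Fintype.card I : ℝ)⁻¹ * ∑ i, hashDev (H i) g) ^ 2
      ≤ (Fintype.card I : ℝ)⁻¹ * ∑ i, (hashDev (H i) g) ^ 2 := by
        rw [mul_pow]
        calc _ ≤ (Fintype.card I : ℝ)⁻¹ ^ 2 * (Fintype.card I * ∑ i, (hashDev (H i) g) ^ 2) := by
              gcongr
          _ = _ := by field_simp
    _ ≤ (Fintype.card I : ℝ)⁻¹ * ∑ i, (Fintype.card S *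
      ((∑ x, ∑ y, if H i x = H i y then g x * g y else 0)
        - (Fintype.card S : ℝ)⁻¹ * (∑ x, g x) ^ 2)) := by
        gcongr with i
        exact h2 i
    _ = Fintype.card S * ((Fintype.card I : ℝ)⁻¹ *
          ∑ i, (∑ x, ∑ y, if H i x = H i y then g x * g y else 0)
          - (Fintype.card S : ℝ)⁻¹ * (∑ x, g x) ^ 2) := by
        rw [← Finset.mul_sum, Finset.sum_sub_distrib, Finset.sum_const, Finset.card_univ,
          nsmul_eq_mul]
        field_simp
    _ ≤ _ := by
        refine mul_le_mul_of_nonneg_left ?_ hM'.le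
        linarith

/-! ### Truncation and interpolation -/

/-- Interpolation between the `ℓ¹` and `ℓ²` estimates by truncation at `(A / M)^(1-ρ)`,
where `A = ∑ x, g x ^ (1 / (1 - ρ))` and `M = |S|`. -/
lemma avg_hashDev_rpow_le [Nonempty I] (H : I → X → S) (hH : Universal2 H) (g : X → ℝ)
    (hg : ∀ x, 0 ≤ g x) (ρ : ℝ) (hρ0 : 0 < ρ) (hρ1 : ρ ≤ 1 / 2) :
    (Fintype.card I : ℝ)⁻¹ * ∑ i, hashDev (H i) g
      ≤ 3 * ((Fintype.card S : ℝ) ^ ρ * (∑ x, g x ^ (1 / (1 - ρ))) ^ (1 - ρ)) := by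
  classical
  have hρ : 0 < 1 - ρ := by linarith
  set q : ℝ := 1 / (1 - ρ) with hq
  set A : ℝ := ∑ x, g x ^ q with hA
  set M : ℝ := (Fintype.card S : ℝ) with hMdef
  have hA0 : 0 ≤ A := Finset.sum_nonneg fun x _ => Real.rpow_nonneg (hg x) _
  have hq1 : 1 ≤ q := by rw [hq, le_div_iff₀ hρ]; linarith
  have hq2 : q ≤ 2 := by rw [hq, div_le_iff₀ hρ]; linarith
  have hqρ : (1 - ρ) * q = 1 := by rw [hq]; field_simp
  have hR0 : 0 ≤ 3 * (M ^ ρ * A ^ (1 - ρ)) := by positivity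
  rcases Nat.eq_zero_or_pos (Fintype.card S) with hS | hS
  · have := Fintype.card_eq_zero_iff.mp hS
    refine le_trans (le_of_eq ?_) hR0
    simp [hashDev]
  rcases hA0.eq_or_lt with hAz | hApos
  · have hgz : ∀ x, g x = 0 := by
      intro x
      have := (Finset.sum_eq_zero_iff_of_nonneg
        (fun x _ => Real.rpow_nonneg (hg x) q)).mp hAz.symm x (Finset.mem_univ x)
      exact (Real.rpow_eq_zero (hg x) (by linarith)).mp this
    refine le_trans (le_of_eq ?_) hR0
    simp [hashDev, hgz]
  have hMpos : 0 < M := by rw [hMdef]; exact_mod_cast hS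
  have hI : 0 < (Fintype.card I : ℝ) := by exact_mod_cast Fintype.card_pos
  set c : ℝ := (A / M) ^ (1 - ρ) with hc
  have hcpos : 0 < c := by positivity
  set g₁ : X → ℝ := fun x => if g x ≤ c then g x else 0 with hg₁
  set g₂ : X → ℝ := fun x => if g x ≤ c then 0 else g x with hg₂
  have hsplit : g = fun x => g₁ x + g₂ x := by
    funext x
    simp only [hg₁, hg₂]
    split_ifs <;> simp
  have hg₁0 : ∀ x, 0 ≤ g₁ x := fun x => by
    simp only [hg₁]; split_ifs; exacts [hg x, le_rfl]
  have hg₂0 : ∀ x, 0 ≤ g₂ x := fun x => by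
    simp only [hg₂]; split_ifs; exacts [le_rfl, hg x]
  have hsum₂ : ∑ x, g₂ x ≤ c ^ (1 - q) * A := by
    rw [hA, Finset.mul_sum]
    refine Finset.sum_le_sum fun x _ => ?_
    simp only [hg₂]
    split_ifs with h
    · exact mul_nonneg (Real.rpow_nonneg hcpos.le _) (Real.rpow_nonneg (hg x) _)
    · push Not at h
      have hx : 0 < g x := hcpos.trans h
      have e1 : g x = g x ^ (1 - q) * g x ^ q := by
        rw [← Real.rpow_add hx]; simp
      calc g x = g x ^ (1 - q) * g x ^ q := e1
        _ ≤ c ^ (1 - q) * g x ^ q :=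
          mul_le_mul_of_nonneg_right
            (Real.rpow_le_rpow_of_nonpos hcpos h.le (by linarith)) (Real.rpow_nonneg hx.le _)
  have hsum₁ : ∑ x, g₁ x ^ 2 ≤ c ^ (2 - q) * A := by
    rw [hA, Finset.mul_sum]
    refine Finset.sum_le_sum fun x _ => ?_
    have hnn : 0 ≤ c ^ (2 - q) * g x ^ q :=
      mul_nonneg (Real.rpow_nonneg hcpos.le _) (Real.rpow_nonneg (hg x) _)
    simp only [hg₁]
    split_ifs with h
    · rcases (hg x).eq_or_lt with hx | hx
      · rw [← hx] at hnn ⊢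
        simpa using hnn
      · have e1 : g x ^ 2 = g x ^ (2 - q) * g x ^ q := by
          rw [← Real.rpow_add hx]; simp
        rw [e1]
        exact mul_le_mul_of_nonneg_right
          (Real.rpow_le_rpow hx.le h (by linarith)) (Real.rpow_nonneg hx.le _)
    · simpa using hnn
  -- With this threshold both truncation bounds become the same quantity `M^ρ A^(1-ρ)`.
  have ec₂ : c ^ (1 - q) * A = M ^ ρ * A ^ (1 - ρ) := by
    have e : (1 - ρ) * (1 - q) = -ρ := by linear_combination -hqρ
    rw [hc, ← Real.rpow_mul (by positivity), e, Real.div_rpow hApos.le hMpos.le,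
      Real.rpow_neg hMpos.le, sub_eq_neg_add, Real.rpow_add hApos, Real.rpow_one]
    field_simp
  have ec₁ : M * (c ^ (2 - q) * A) = (M ^ ρ * A ^ (1 - ρ)) ^ 2 := by
    have e : c ^ (2 - q) = c ^ (1 - q) * c := by
      rw [show 2 - q = (1 - q) + 1 by ring, Real.rpow_add hcpos, Real.rpow_one]
    have e2 : M * c = M ^ ρ * A ^ (1 - ρ) := by
      rw [hc, Real.div_rpow hApos.le hMpos.le, Real.rpow_sub hMpos, Real.rpow_one]
      field_simp
    rw [e, sq]
    nth_rewrite 1 [← ec₂]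
    rw [← e2]
    ring
  have b₁ : (Fintype.card I : ℝ)⁻¹ * ∑ i, hashDev (H i) g₁ ≤ M ^ ρ * A ^ (1 - ρ) := by
    refine (avg_hashDev_le H hH g₁ hg₁0 hS).trans ?_
    rw [Real.sqrt_le_left (by positivity), ← ec₁]
    exact mul_le_mul_of_nonneg_left hsum₁ hMpos.le
  have b₂ : (Fintype.card I : ℝ)⁻¹ * ∑ i, hashDev (H i) g₂ ≤ 2 * (M ^ ρ * A ^ (1 - ρ)) := by
    rw [inv_mul_le_iff₀ hI, ← ec₂]
    calc ∑ i, hashDev (H i) g₂ ≤ ∑ _i : I, 2 * (c ^ (1 - q) * A) :=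
          Finset.sum_le_sum fun i _ => (hashDev_le (H i) g₂ hg₂0 hS).trans (by linarith)
      _ = _ := by simp
  have b : (Fintype.card I : ℝ)⁻¹ * ∑ i, hashDev (H i) g
      ≤ (Fintype.card I : ℝ)⁻¹ * ∑ i, hashDev (H i) g₁
        + (Fintype.card I : ℝ)⁻¹ * ∑ i, hashDev (H i) g₂ := by
    rw [← mul_add, ← Finset.sum_add_distrib]
    refine mul_le_mul_of_nonneg_left (Finset.sum_le_sum fun i _ => ?_) (by positivity)
    have := hashDev_add (H i) g₁ g₂
    rwa [← hsplit] at this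
  linarith

end

/-! ### Decomposition over `z` -/

lemma security_eq {X Z S : Type*} [Fintype X] [Fintype Z] [Fintype S] [DecidableEq S]
    (f : X → S) (P : X × Z → ℝ) :
    security f P = (1 / 2) * ∑ z, hashDev f (fun x => P (x, z)) := by
  unfold security vdist hashDev
  rw [Fintype.sum_prod_type_right]
  rfl

/-- Homogeneity of the `ℓ^(1/(1-ρ))` norm turns conditional probabilities into joint ones. -/
lemma phi_term {X Z : Type*} [Fintype X] (P : X × Z → ℝ)
    (hP : ∀ a, 0 ≤ P a) (ρ : ℝ) (hρ : 0 < 1 - ρ) (z : Z) :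
    (∑ x, P (x, z) ^ ((1 : ℝ) / (1 - ρ))) ^ (1 - ρ) = if margZ P z ≠ 0 then
      margZ P z * (∑ x, (P (x, z) / margZ P z) ^ ((1 : ℝ) / (1 - ρ))) ^ (1 - ρ) else 0 := by
  have hm : 0 ≤ margZ P z := Finset.sum_nonneg fun x _ => hP _
  split_ifs with h
  · have hm' : 0 < margZ P z := lt_of_le_of_ne hm (Ne.symm h)
    have e : ∑ x, (P (x, z) / margZ P z) ^ ((1 : ℝ) / (1 - ρ))
        = (∑ x, P (x, z) ^ ((1 : ℝ) / (1 - ρ))) / margZ P z ^ ((1 : ℝ) / (1 - ρ)) := by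
      rw [Finset.sum_div]
      exact Finset.sum_congr rfl fun x _ => Real.div_rpow (hP _) hm _
    rw [e, Real.div_rpow (Finset.sum_nonneg fun x _ => Real.rpow_nonneg (hP _) _)
      (Real.rpow_nonneg hm _), ← Real.rpow_mul hm, one_div_mul_cancel hρ.ne', Real.rpow_one]
    field_simp
  · push Not at h
    have h0 : ∀ x, P (x, z) = 0 := fun x =>
      (Finset.sum_eq_zero_iff_of_nonneg (fun x _ => hP (x, z))).mp h x (Finset.mem_univ x)
    have : (1 : ℝ) / (1 - ρ) ≠ 0 := by positivity
    simp [h0, Real.zero_rpow hρ.ne', Real.zero_rpow (inv_ne_zero hρ.ne')]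

/-- Exponential bound (Theorem 4). -/
theorem exponential_bound {I X Z S : Type*} [Fintype I] [Nonempty I] [Fintype X] [Fintype Z]
    [Fintype S] [DecidableEq S]
    (H : I → X → S) (hH : Universal2 H)
    (P : X × Z → ℝ) (hP : IsDist P)
    (ρ : ℝ) (hρ0 : 0 < ρ) (hρ1 : ρ ≤ 1 / 2) :
    expSecurity H P ≤ (3 / 2) * (Fintype.card S : ℝ) ^ ρ * Real.exp (phi ρ P) := by
  have hρ : 0 < 1 - ρ := by linarith
  have hexp : ∑ z, (∑ x, P (x, z) ^ ((1 : ℝ) / (1 - ρ))) ^ (1 - ρ) ≤ Real.exp (phi ρ P) := by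
    unfold phi
    simp_rw [← phi_term P hP.1 ρ hρ]
    exact Real.le_exp_log _
  calc expSecurity H P
      = (1 / 2) * ∑ z, (Fintype.card I : ℝ)⁻¹ * ∑ i, hashDev (H i) (fun x => P (x, z)) := by
        unfold expSecurity
        simp_rw [security_eq]
        rw [← Finset.mul_sum, Finset.sum_comm, ← Finset.mul_sum]
        ring
    _ ≤ (1 / 2) * ∑ z, 3 * ((Fintype.card S : ℝ) ^ ρ *
          (∑ x, P (x, z) ^ ((1 : ℝ) / (1 - ρ))) ^ (1 - ρ)) := by
        refine mul_le_mul_of_nonneg_left (Finset.sum_le_sum fun z _ => ?_) (by norm_num)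
        exact avg_hashDev_rpow_le H hH (fun x => P (x, z)) (fun x => hP.1 _) ρ hρ0 hρ1
    _ = (3 / 2) * (Fintype.card S : ℝ) ^ ρ *
          ∑ z, (∑ x, P (x, z) ^ ((1 : ℝ) / (1 - ρ))) ^ (1 - ρ) := by
        rw [← Finset.mul_sum, ← Finset.mul_sum]
        ring
    _ ≤ _ := mul_le_mul_of_nonneg_left hexp (by positivity)
end

section
/- Jensen comparison of φ and Rényi entropy: Let X and Z be finite sets and P_XZ a probability distribution on X × Z with marginal P_Z. For any 0 < θ ≤ 1, setting ρ = θ/(1+θ), one has φ(ρ|P_XZ) ≤ −(θ/(1+θ)) · H_{1+θ}(P_XZ|P_Z). -/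
/-!
With `q z = P_Z(z)` and `g z = ∑ₓ P(x|z)^{1+θ}`, the choice `ρ = θ/(1+θ)` gives
`1 - ρ = 1/(1+θ)`, so that `exp φ = ∑ q z * g z ^ (1/(1+θ))`, while the right-hand side of the
claim is `(1/(1+θ)) * log (∑ q z * g z)`. The inequality is therefore the power mean inequality
`Real.arith_mean_le_rpow_mean` with weights `q` and exponent `1 + θ ≥ 1`, followed by monotonicity
of the logarithm. The latter needs `exp φ > 0`, which holds because `P` charges some point.
-/

open Real Finset

/-- Jensen comparison of φ and the Rényi entropy. -/
theorem phi_le_renyi {X Z : Type*} [Fintype X] [Fintype Z]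
    (P : X × Z → ℝ) (hP : IsDist P)
    (θ : ℝ) (hθ0 : 0 < θ) (hθ1 : θ ≤ 1) :
    phi (θ / (1 + θ)) P ≤ -(θ / (1 + θ)) * Hrenyi θ P (margZ P) := by
  obtain ⟨hP0, hP1⟩ := hP
  have h1θ : (0 : ℝ) < 1 + θ := by linarith
  have hρ : 1 - θ / (1 + θ) = 1 / (1 + θ) := by field_simp; ring
  have hρ' : (1 : ℝ) / (1 / (1 + θ)) = 1 + θ := one_div_one_div _
  have hq0 : ∀ z, 0 ≤ margZ P z := fun z => Finset.sum_nonneg fun x _ => hP0 _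
  have hq1 : ∑ z, margZ P z = 1 := by
    rw [← hP1, Fintype.sum_prod_type_right]
    rfl
  set g : Z → ℝ := fun z => ∑ x, (P (x, z) / margZ P z) ^ (1 + θ) with hg
  have hg0 : ∀ z, 0 ≤ g z := fun z =>
    Finset.sum_nonneg fun x _ => Real.rpow_nonneg (div_nonneg (hP0 _) (hq0 z)) _
  -- The restriction to the support of `P_Z` is immaterial: the weight vanishes off it.
  have hL : phi (θ / (1 + θ)) P = Real.log (∑ z, margZ P z * g z ^ (1 / (1 + θ))) := by
    unfold phi
    rw [hρ, hρ']
    congr 1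
    refine Finset.sum_congr rfl fun z _ => ?_
    split_ifs with h
    · rfl
    · rw [not_not.mp h, zero_mul]
  have hR : Hrenyi θ P (margZ P) = -(1 / θ) * Real.log (∑ z, margZ P z * g z) := by
    unfold Hrenyi
    rw [Fintype.sum_prod_type_right]
    congr 2
    refine Finset.sum_congr rfl fun z _ => ?_
    rw [hg, Finset.mul_sum]
    refine Finset.sum_congr rfl fun x _ => ?_
    dsimp only
    split_ifs with h
    · rfl
    · rw [not_not.mp h, zero_mul]
  have hpos : 0 < ∑ z, margZ P z * g z ^ (1 / (1 + θ)) := by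
    obtain ⟨⟨x, z⟩, -, hxz⟩ : ∃ xz ∈ (Finset.univ : Finset (X × Z)), 0 < P xz :=
      Finset.exists_lt_of_sum_lt (by simp [hP1])
    have hqz : 0 < margZ P z :=
      Finset.sum_pos' (fun x _ => hP0 _) ⟨x, Finset.mem_univ x, hxz⟩
    have hgz : 0 < g z :=
      Finset.sum_pos' (fun x _ => Real.rpow_nonneg (div_nonneg (hP0 _) (hq0 z)) _)
        ⟨x, Finset.mem_univ x, Real.rpow_pos_of_pos (div_pos hxz hqz) _⟩
    exact Finset.sum_pos' (fun z _ => mul_nonneg (hq0 z) (Real.rpow_nonneg (hg0 z) _))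
      ⟨z, Finset.mem_univ z, mul_pos hqz (Real.rpow_pos_of_pos hgz _)⟩
  have hmean : ∑ z, margZ P z * g z ^ (1 / (1 + θ))
      ≤ (∑ z, margZ P z * g z) ^ (1 / (1 + θ)) := by
    have h := Real.arith_mean_le_rpow_mean Finset.univ (margZ P) (fun z => g z ^ (1 / (1 + θ)))
      (fun z _ => hq0 z) hq1 (fun z _ => Real.rpow_nonneg (hg0 z) _)
      (p := 1 + θ) (by linarith)
    have hpow : ∀ z, (g z ^ (1 / (1 + θ))) ^ (1 + θ) = g z := fun z => by
      rw [← Real.rpow_mul (hg0 z), one_div_mul_cancel h1θ.ne', Real.rpow_one]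
    simpa only [hpow] using h
  have hT0 : 0 ≤ ∑ z, margZ P z * g z :=
    Finset.sum_nonneg fun z _ => mul_nonneg (hq0 z) (hg0 z)
  have hT : 0 < ∑ z, margZ P z * g z := by
    refine hT0.lt_of_ne fun h => ?_
    rw [← h, Real.zero_rpow (by positivity)] at hmean
    linarith
  have hlog := Real.log_le_log hpos hmean
  rw [Real.log_rpow hT] at hlog
  rw [hL, hR]
  refine hlog.trans_eq ?_
  field_simp
end

section
/- Rényi-entropy exponential bound (Corollary 5): Let X, Z, S be finite sets, let F be a universal-2 hash family of functions from X to S with F drawn uniformly, and let P_XZ be a probability distribution on X × Z with marginal P_Z. Then for any 0 < θ ≤ 1, E_F[d(F|P_XZ)] ≤ (3/2) · |S|^{θ/(1+θ)} · e^{−(θ/(1+θ)) H_{1+θ}(P_XZ|P_Z)}. -/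
/-!
The bound is the leftover hash lemma applied after a truncation. Write `R = P_Z` and
`A = ∑ R (P/R)^{1+θ}`, so that the right-hand side is `(3/2) B` with
`B = |S|^{θ/(1+θ)} A^{1/(1+θ)}`. For a threshold `c > 0`, split `P = P₁ + P₂` with `P₁` the
restriction of `P` to `{P ≤ c R}`.

* The security is subadditive in `P` (`security_add_le`) and the security of `P₂` is at most its
  total mass (`security_le_sum`), which is at most `c^{-θ} A` because `P/R > c` on its support.
* The leftover hash lemma (`expSecurity_le_sqrt`) bounds the expected security of `P₁` by
  `(1/2) √(|S| ∑ P₁²/R)`, and `∑ P₁²/R ≤ c^{1-θ} A` because `P/R ≤ c` on its support. This lemma is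
  Cauchy–Schwarz with weight `R` together with the collision estimate `collision_bound`.

The choice `c = (A/|S|)^{1/(1+θ)}` makes the two bounds equal to `B` and `B/2`.
-/

open Real Finset

/-- The second-moment estimate behind the leftover hash lemma, for a fixed value of the side
information: the diagonal pairs `x = x'` contribute `∑ q²`, and universality bounds the remaining
collisions by the term `(∑ q)² / |S|` that the variance subtracts. -/
lemma collision_bound {I X S : Type*} [Fintype I] [Nonempty I] [Fintype X] [Fintype S] [Nonempty S]
    [DecidableEq S] (H : I → X → S) (hH : Universal2 H) (q : X → ℝ) (hq : ∀ x, 0 ≤ q x) :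
    ∑ i, ∑ s, ((∑ x, if H i x = s then q x else 0) - (Fintype.card S : ℝ)⁻¹ * ∑ x, q x) ^ 2
      ≤ (Fintype.card I : ℝ) * ∑ x, q x ^ 2 := by
  classical
  have hS : (0 : ℝ) < Fintype.card S := by exact_mod_cast Fintype.card_pos
  have hI : (0 : ℝ) < Fintype.card I := by exact_mod_cast Fintype.card_pos
  set M : ℝ := (Fintype.card S : ℝ) with hM
  set T : ℝ := ∑ x, q x with hT
  have h1 : ∀ i, ∑ s, ((∑ x, if H i x = s then q x else 0) - M⁻¹ * T) ^ 2
      = (∑ x, ∑ x', if H i x = H i x' then q x * q x' else 0) - M⁻¹ * T ^ 2 := by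
    intro i
    have hsum : ∑ s, (∑ x, if H i x = s then q x else 0) = T := by
      rw [Finset.sum_comm]
      simp [hT]
    have hsq : ∑ s, (∑ x, if H i x = s then q x else 0) ^ 2
        = ∑ x, ∑ x', if H i x = H i x' then q x * q x' else 0 := by
      have : ∀ s, (∑ x, if H i x = s then q x else 0) ^ 2
          = ∑ x, ∑ x', if H i x = s then (if H i x' = s then q x * q x' else 0) else 0 := by
        intro s
        rw [sq, Finset.sum_mul_sum]
        refine Finset.sum_congr rfl fun x _ => Finset.sum_congr rfl fun x' _ => ?_
        split_ifs <;> simp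
      simp_rw [this]
      rw [Finset.sum_comm]
      refine Finset.sum_congr rfl fun x _ => ?_
      rw [Finset.sum_comm]
      refine Finset.sum_congr rfl fun x' _ => ?_
      simp [eq_comm]
    have : ∀ s, ((∑ x, if H i x = s then q x else 0) - M⁻¹ * T) ^ 2
        = (∑ x, if H i x = s then q x else 0) ^ 2
          - 2 * (M⁻¹ * T) * (∑ x, if H i x = s then q x else 0) + (M⁻¹ * T) ^ 2 := by
      intro s; ring
    simp_rw [this]
    rw [Finset.sum_add_distrib, Finset.sum_sub_distrib, ← Finset.mul_sum, hsum, hsq]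
    simp only [Finset.sum_const, Finset.card_univ, nsmul_eq_mul, ← hM]
    field_simp
    ring
  simp_rw [h1]
  rw [Finset.sum_sub_distrib, Finset.sum_comm]
  have h2 : ∀ x x', (∑ i, if H i x = H i x' then q x * q x' else 0)
      ≤ (if x = x' then Fintype.card I * q x ^ 2 else 0)
        + Fintype.card I * M⁻¹ * (q x * q x') := by
    intro x x'
    have hqq : 0 ≤ q x * q x' := mul_nonneg (hq x) (hq x')
    by_cases h : x = x'
    · subst h
      simp only [if_true, Finset.sum_const, Finset.card_univ, nsmul_eq_mul]
      have : 0 ≤ (Fintype.card I : ℝ) * M⁻¹ * (q x * q x) := by positivity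
      nlinarith
    · rw [if_neg h, zero_add, ← Finset.sum_filter, Finset.sum_const, nsmul_eq_mul]
      have := hH x x' h
      rw [div_le_iff₀ hI, one_div] at this
      refine mul_le_mul_of_nonneg_right ?_ hqq
      linarith
  have h3 : ∑ x, ∑ i, ∑ x', (if H i x = H i x' then q x * q x' else 0)
      ≤ Fintype.card I * ∑ x, q x ^ 2 + Fintype.card I * M⁻¹ * T ^ 2 := by
    calc ∑ x, ∑ i, ∑ x', (if H i x = H i x' then q x * q x' else 0)
        = ∑ x, ∑ x', ∑ i, (if H i x = H i x' then q x * q x' else 0) :=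
          Finset.sum_congr rfl fun x _ => Finset.sum_comm
      _ ≤ ∑ x, ∑ x', ((if x = x' then Fintype.card I * q x ^ 2 else 0)
        + Fintype.card I * M⁻¹ * (q x * q x')) :=
          Finset.sum_le_sum fun x _ => Finset.sum_le_sum fun x' _ => h2 x x'
      _ = _ := by
          simp_rw [Finset.sum_add_distrib, ← Finset.mul_sum]
          rw [← Finset.sum_mul, ← hT, ← sq]
          simp [Finset.mul_sum]
  simp only [Finset.sum_const, Finset.card_univ, nsmul_eq_mul]
  linarith

/-- Leftover hash lemma for a non-negative `Q`, not necessarily normalized, and any reference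
distribution `R` whose support contains that of the `Z`-marginal of `Q`. Since `a / 0 = 0`, the sum
on the right is over the support of `R`. -/
lemma expSecurity_le_sqrt {I X Z S : Type*} [Fintype I] [Nonempty I] [Fintype X]
    [Fintype Z] [Fintype S] [Nonempty S] [DecidableEq S]
    (H : I → X → S) (hH : Universal2 H)
    (Q : X × Z → ℝ) (hQ : ∀ a, 0 ≤ Q a) (R : Z → ℝ) (hR : ∀ z, 0 ≤ R z) (hR1 : ∑ z, R z = 1)
    (hQR : ∀ x z, R z = 0 → Q (x, z) = 0) :
    expSecurity H Q ≤ (1 / 2) * √(Fintype.card S * ∑ xz : X × Z, Q xz ^ 2 / R xz.2) := by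
  have hS : (0 : ℝ) < Fintype.card S := by exact_mod_cast Fintype.card_pos
  have hI : (0 : ℝ) < Fintype.card I := by exact_mod_cast Fintype.card_pos
  set D : I × S × Z → ℝ := fun a =>
    keyDist (H a.1) Q a.2 - (Fintype.card S : ℝ)⁻¹ * margZ Q a.2.2 with hD
  have hexp : expSecurity H Q = (1 / 2) * ((Fintype.card I : ℝ)⁻¹ * ∑ a, |D a|) := by
    simp only [expSecurity, security, vdist, hD]
    rw [Fintype.sum_prod_type, ← Finset.mul_sum]
    ring
  have hD0 : ∀ a : I × S × Z, R a.2.2 = 0 → D a = 0 := by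
    intro a ha
    simp [hD, keyDist, margZ, hQR _ _ ha]
  have hCS : (∑ a, |D a|) ^ 2 ≤ (∑ a : I × S × Z, R a.2.2) * ∑ a, D a ^ 2 / R a.2.2 := by
    refine Finset.sum_sq_le_sum_mul_sum_of_sq_le_mul _ (fun a _ => hR _)
      (fun a _ => div_nonneg (sq_nonneg _) (hR _)) fun a _ => ?_
    rw [sq_abs]
    refine le_of_eq ?_
    by_cases h : R a.2.2 = 0
    · simp [hD0 a h, h]
    · field_simp
  have hRsum : (∑ a : I × S × Z, R a.2.2) = Fintype.card I * Fintype.card S := by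
    simp [Fintype.sum_prod_type, hR1]
  have hDsum : ∑ a, D a ^ 2 / R a.2.2 ≤ Fintype.card I * ∑ xz : X × Z, Q xz ^ 2 / R xz.2 := by
    have e1 : ∑ a, D a ^ 2 / R a.2.2 = ∑ z, (∑ i, ∑ s, D (i, s, z) ^ 2) / R z := by
      simp_rw [Fintype.sum_prod_type, Finset.sum_div]
      rw [Finset.sum_comm (s := (Finset.univ : Finset Z))]
      exact Finset.sum_congr rfl fun i _ => Finset.sum_comm
    have e2 : ∑ xz : X × Z, Q xz ^ 2 / R xz.2 = ∑ z, (∑ x, Q (x, z) ^ 2) / R z := by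
      rw [Fintype.sum_prod_type_right]
      simp_rw [Finset.sum_div]
    rw [e1, e2, Finset.mul_sum]
    refine Finset.sum_le_sum fun z _ => ?_
    rw [← mul_div_assoc]
    exact div_le_div_of_nonneg_right
      (collision_bound H hH (fun x => Q (x, z)) fun x => hQ _) (hR z)
  rw [hexp]
  refine mul_le_mul_of_nonneg_left (Real.le_sqrt_of_sq_le ?_) (by norm_num)
  rw [mul_pow]
  calc ((Fintype.card I : ℝ)⁻¹) ^ 2 * (∑ a, |D a|) ^ 2
      ≤ ((Fintype.card I : ℝ)⁻¹) ^ 2 * ((Fintype.card I * Fintype.card S) *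
          (Fintype.card I * ∑ xz : X × Z, Q xz ^ 2 / R xz.2)) := by
        rw [hRsum] at hCS
        gcongr
        exact hCS.trans (by gcongr)
    _ = _ := by field_simp

lemma security_add_le {X Z S : Type*} [Fintype X] [Fintype Z] [Fintype S] [DecidableEq S]
    (f : X → S) (P Q : X × Z → ℝ) :
    security f (fun a => P a + Q a) ≤ security f P + security f Q := by
  simp only [security, vdist]
  rw [← mul_add, ← Finset.sum_add_distrib]
  refine mul_le_mul_of_nonneg_left (Finset.sum_le_sum fun a _ => ?_) (by norm_num)
  refine le_trans (le_of_eq ?_) (abs_add_le _ _)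
  have h1 : keyDist f (fun a => P a + Q a) a = keyDist f P a + keyDist f Q a := by
    simp only [keyDist]
    rw [← Finset.sum_add_distrib]
    exact Finset.sum_congr rfl fun x _ => by split_ifs <;> simp
  have h2 : margZ (fun a => P a + Q a) a.2 = margZ P a.2 + margZ Q a.2 := by
    simp [margZ, Finset.sum_add_distrib]
  rw [h1, h2]
  congr 1
  ring

lemma security_le_sum {X Z S : Type*} [Fintype X] [Fintype Z] [Fintype S] [Nonempty S]
    [DecidableEq S] (f : X → S) (Q : X × Z → ℝ) (hQ : ∀ a, 0 ≤ Q a) :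
    security f Q ≤ ∑ a, Q a := by
  have hS : (Fintype.card S : ℝ) ≠ 0 := by exact_mod_cast Fintype.card_ne_zero
  have hm : ∀ z, 0 ≤ margZ Q z := fun z => Finset.sum_nonneg fun x _ => hQ _
  have hk : ∀ a, 0 ≤ keyDist f Q a := fun a => Finset.sum_nonneg fun x _ => by
    split_ifs
    exacts [hQ _, le_rfl]
  have h1 : ∑ a, keyDist f Q a = ∑ a, Q a := by
    rw [Fintype.sum_prod_type_right, Fintype.sum_prod_type_right]
    refine Finset.sum_congr rfl fun z _ => ?_
    simp only [keyDist]
    rw [Finset.sum_comm]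
    simp
  have h2 : ∑ a : S × Z, (Fintype.card S : ℝ)⁻¹ * margZ Q a.2 = ∑ a, Q a := by
    rw [Fintype.sum_prod_type_right, Fintype.sum_prod_type_right]
    refine Finset.sum_congr rfl fun z _ => ?_
    simp [margZ, hS]
  have h3 : ∑ a : S × Z, |keyDist f Q a - (Fintype.card S : ℝ)⁻¹ * margZ Q a.2|
      ≤ ∑ a : S × Z, (keyDist f Q a + (Fintype.card S : ℝ)⁻¹ * margZ Q a.2) := by
    refine Finset.sum_le_sum fun a _ => ?_
    have : 0 ≤ (Fintype.card S : ℝ)⁻¹ * margZ Q a.2 := mul_nonneg (by positivity) (hm _)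
    rw [abs_le]
    constructor <;> linarith [hk a]
  rw [Finset.sum_add_distrib, h1, h2] at h3
  simp only [security, vdist]
  linarith

/-- Rényi-entropy exponential bound (Corollary 5). -/
theorem renyi_exponential_bound {I X Z S : Type*} [Fintype I] [Nonempty I] [Fintype X]
    [Fintype Z] [Fintype S] [DecidableEq S]
    (H : I → X → S) (hH : Universal2 H)
    (P : X × Z → ℝ) (hP : IsDist P)
    (θ : ℝ) (hθ0 : 0 < θ) (hθ1 : θ ≤ 1) :
    expSecurity H P ≤ (3 / 2) * (Fintype.card S : ℝ) ^ (θ / (1 + θ)) *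
      Real.exp (-(θ / (1 + θ)) * Hrenyi θ P (margZ P)) := by
  obtain ⟨hP0, hP1⟩ := hP
  obtain ⟨⟨x₀, z₀⟩, -, hxz⟩ : ∃ a ∈ Finset.univ, P a ≠ 0 := by
    refine Finset.exists_ne_zero_of_sum_ne_zero ?_
    rw [hP1]; exact one_ne_zero
  have : Nonempty S := ⟨H (Classical.arbitrary I) x₀⟩
  have hS : (0 : ℝ) < Fintype.card S := by exact_mod_cast Fintype.card_pos
  have hI : (0 : ℝ) < Fintype.card I := by exact_mod_cast Fintype.card_pos
  set R := margZ P with hRdef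
  have hR : ∀ z, 0 ≤ R z := fun z => Finset.sum_nonneg fun x _ => hP0 _
  have hPR : ∀ x z, P (x, z) ≤ R z := fun x z =>
    Finset.single_le_sum (f := fun x => P (x, z)) (fun x _ => hP0 _) (Finset.mem_univ x)
  have hPR0 : ∀ x z, R z = 0 → P (x, z) = 0 := fun x z h =>
    le_antisymm ((hPR x z).trans h.le) (hP0 _)
  have hR1 : ∑ z, R z = 1 := by
    rw [← hP1, Fintype.sum_prod_type_right]; rfl
  set T : X × Z → ℝ := fun xz =>
    if R xz.2 ≠ 0 then R xz.2 * (P xz / R xz.2) ^ (1 + θ) else 0 with hT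
  have hT0 : ∀ a, 0 ≤ T a := by
    intro a
    simp only [hT]
    split_ifs
    · exact mul_nonneg (hR _) (Real.rpow_nonneg (div_nonneg (hP0 _) (hR _)) _)
    · exact le_rfl
  set A : ℝ := ∑ a, T a with hA
  have hApos : 0 < A := by
    have hp : 0 < P (x₀, z₀) := lt_of_le_of_ne (hP0 _) hxz.symm
    have hr : 0 < R z₀ := hp.trans_le (hPR _ _)
    refine Finset.sum_pos' (fun a _ => hT0 a) ⟨(x₀, z₀), Finset.mem_univ _, ?_⟩
    simp only [hT, ne_eq, hr.ne', not_false_eq_true, if_true]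
    positivity
  set M : ℝ := (Fintype.card S : ℝ) with hM
  have hθ' : (1 + θ) ≠ 0 := by positivity
  set c : ℝ := (A / M) ^ (1 / (1 + θ)) with hc
  have hcpos : 0 < c := Real.rpow_pos_of_pos (div_pos hApos hS) _
  set B : ℝ := M ^ (θ / (1 + θ)) * A ^ (1 / (1 + θ)) with hB
  have hBpos : 0 < B := by positivity
  have hexp : Real.exp (-(θ / (1 + θ)) * Hrenyi θ P R) = A ^ (1 / (1 + θ)) := by
    rw [Real.rpow_def_of_pos hApos]
    simp only [Hrenyi]
    congr 1
    change -(θ / (1 + θ)) * (-(1 / θ) * Real.log A) = _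
    field_simp
  have hc1 : c ^ (-θ) * A = B := by
    rw [hc, hB, Real.rpow_def_of_pos (Real.rpow_pos_of_pos (div_pos hApos hS) _),
      Real.log_rpow (div_pos hApos hS), Real.log_div hApos.ne' hS.ne',
      Real.rpow_def_of_pos hS, Real.rpow_def_of_pos hApos, ← Real.exp_add]
    conv_lhs => rw [← Real.exp_log hApos]
    rw [Real.log_exp, ← Real.exp_add]
    congr 1
    field_simp
    ring
  have hc2 : M * (c ^ (1 - θ) * A) = B ^ 2 := by
    have h1 : c ^ (1 + θ) = A / M := by
      rw [hc, ← Real.rpow_mul (div_pos hApos hS).le, one_div_mul_cancel hθ', Real.rpow_one]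
    have h2 : c ^ (1 - θ) = c ^ (-θ) * c ^ (-θ) * c ^ (1 + θ) := by
      rw [← Real.rpow_add hcpos, ← Real.rpow_add hcpos]
      congr 1
      ring
    rw [h2, h1, sq, ← hc1]
    field_simp
  set P₁ : X × Z → ℝ := fun a => if P a ≤ c * R a.2 then P a else 0 with hP₁
  set P₂ : X × Z → ℝ := fun a => if P a ≤ c * R a.2 then 0 else P a with hP₂
  have hsplit : P = fun a => P₁ a + P₂ a := by
    funext a
    simp only [hP₁, hP₂]
    split_ifs <;> simp
  have hP₁0 : ∀ a, 0 ≤ P₁ a := fun a => by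
    simp only [hP₁]; split_ifs; exacts [hP0 a, le_rfl]
  have hP₂0 : ∀ a, 0 ≤ P₂ a := fun a => by
    simp only [hP₂]; split_ifs; exacts [le_rfl, hP0 a]
  have hb1 : ∑ a, P₁ a ^ 2 / R a.2 ≤ c ^ (1 - θ) * A := by
    rw [hA, Finset.mul_sum]
    refine Finset.sum_le_sum fun a _ => ?_
    have hnn : 0 ≤ c ^ (1 - θ) * T a := mul_nonneg (by positivity) (hT0 a)
    by_cases hr : R a.2 = 0
    · simpa [hr] using hnn
    by_cases h : P a ≤ c * R a.2
    · have hrp : 0 < R a.2 := lt_of_le_of_ne (hR _) (Ne.symm hr)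
      have ht0 : 0 ≤ P a / R a.2 := div_nonneg (hP0 a) hrp.le
      have htc : P a / R a.2 ≤ c := (div_le_iff₀ hrp).2 h
      simp only [hP₁, hT, h, if_true, ne_eq, hr, not_false_eq_true]
      have e1 : (P a / R a.2) ^ (1 - θ) * (P a / R a.2) ^ (1 + θ) = (P a / R a.2) ^ 2 := by
        rw [← Real.rpow_add_of_nonneg ht0 (by linarith) (by linarith), ← Real.rpow_natCast]
        congr 1
        push_cast
        ring
      calc P a ^ 2 / R a.2 = R a.2 * (P a / R a.2) ^ 2 := by field_simp
        _ = (P a / R a.2) ^ (1 - θ) * (R a.2 * (P a / R a.2) ^ (1 + θ)) := by rw [← e1]; ring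
        _ ≤ _ := by
          refine mul_le_mul_of_nonneg_right
            (Real.rpow_le_rpow ht0 htc (by linarith)) (by positivity)
    · simpa [hP₁, h] using hnn
  have hb2 : ∑ a, P₂ a ≤ c ^ (-θ) * A := by
    rw [hA, Finset.mul_sum]
    refine Finset.sum_le_sum fun a _ => ?_
    have hnn : 0 ≤ c ^ (-θ) * T a := mul_nonneg (by positivity) (hT0 a)
    by_cases h : P a ≤ c * R a.2
    · simpa [hP₂, h] using hnn
    by_cases hr : R a.2 = 0
    · have : P a = 0 := hPR0 a.1 a.2 hr
      simpa [hP₂, this] using hnn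
    have hrp : 0 < R a.2 := lt_of_le_of_ne (hR _) (Ne.symm hr)
    have htc : c < P a / R a.2 := (lt_div_iff₀ hrp).2 (not_le.1 h)
    have htp : 0 < P a / R a.2 := hcpos.trans htc
    simp only [hP₂, hT, h, if_false, if_true, ne_eq, hr, not_false_eq_true]
    calc P a = (P a / R a.2) ^ (-θ) * (R a.2 * (P a / R a.2) ^ (1 + θ)) := by
          rw [mul_left_comm, ← Real.rpow_add htp]
          simp only [neg_add_cancel_comm_assoc, Real.rpow_one]
          field_simp
      _ ≤ _ := by
          refine mul_le_mul_of_nonneg_right ?_ (by positivity)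
          exact Real.rpow_le_rpow_of_nonpos hcpos htc.le (by linarith)
  have hL : expSecurity H P₁ ≤ (1 / 2) * B := by
    refine (expSecurity_le_sqrt H hH P₁ hP₁0 R hR hR1 fun x z h => ?_).trans ?_
    · simp [hP₁, hPR0 x z h]
    · refine mul_le_mul_of_nonneg_left ?_ (by norm_num)
      rw [Real.sqrt_le_left hBpos.le, ← hc2]
      gcongr
  have hadd : expSecurity H P ≤ expSecurity H P₁ + ∑ a, P₂ a := by
    simp only [expSecurity]
    have h1 : ∑ i, security (H i) P ≤ ∑ i, (security (H i) P₁ + ∑ a, P₂ a) := by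
      refine Finset.sum_le_sum fun i _ => ?_
      conv_lhs => rw [hsplit]
      exact (security_add_le _ _ _).trans (by gcongr; exact security_le_sum _ _ hP₂0)
    rw [Finset.sum_add_distrib, Finset.sum_const, Finset.card_univ, nsmul_eq_mul] at h1
    refine (mul_le_mul_of_nonneg_left h1 (inv_nonneg.2 hI.le)).trans (le_of_eq ?_)
    field_simp
  rw [hexp, mul_assoc, ← hB]
  linarith
end

section
/- Limit of the conditional Rényi entropy at order 1: Let X and Z be finite sets, P_XZ a probability distribution on X × Z with marginal P_Z, and R_Z a probability distribution on Z with supp(P_Z) ⊆ supp(R_Z). Then lim_{θ → 0⁺} H_{1+θ}(P_XZ|R_Z) = H(X|Z) − D(P_Z ∥ R_Z), where H(X|Z) = −∑_{x,z: P_XZ(x,z)>0} P_XZ(x,z) log(P_XZ(x,z)/P_Z(z)) is the conditional Shannon entropy and D(P_Z ∥ R_Z) = ∑_{z: P_Z(z)>0} P_Z(z) log(P_Z(z)/R_Z(z)) is the Kullback–Leibler divergence. -/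
/-!
Put `S(θ) = ∑ R(z) (P(x,z)/R(z))^{1+θ}` over `z ∈ supp R`. Since `supp P_Z ⊆ supp R_Z`, `S(0) = 1`,
so `-H_{1+θ} = (log S(θ) - log S(0))/θ` is a difference quotient of `log S` at `0`. Its limit is
`S'(0) = ∑ P(x,z) log (P(x,z)/R(z))` (`hasDerivAt_renyiTerm`), and the factorization
`P/R = (P/P_Z) (P_Z/R)` splits this sum into `-H(X|Z)` and `D(P_Z ∥ R_Z)` (`sum_mul_log_split`).
-/

open Real Finset

theorem le_margZ {X Z : Type*} [Fintype X] {P : X × Z → ℝ} (hP : ∀ a, 0 ≤ P a) (xz : X × Z) :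
    P xz ≤ margZ P xz.2 :=
  Finset.single_le_sum (f := fun x => P (x, xz.2)) (fun _ _ => hP _) (Finset.mem_univ xz.1)

/-- Derivative at order one of a single summand, with `p = P(x,z)` and `r = R(z)`. The value
`p * log (p / r)` is `0` when `p = 0`, where the summand vanishes for all `θ` near `0`. -/
theorem hasDerivAt_renyiTerm {p r : ℝ} (hp : 0 ≤ p) (hr : 0 ≤ r) (hpr : p ≠ 0 → r ≠ 0) :
    HasDerivAt (fun θ : ℝ => if r ≠ 0 then r * (p / r) ^ (1 + θ) else 0)
      (p * Real.log (p / r)) 0 := by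
  by_cases hr0 : r = 0
  · have hp0 : p = 0 := by
      by_contra h
      exact hpr h hr0
    simpa [hr0, hp0] using hasDerivAt_const (0 : ℝ) (0 : ℝ)
  simp only [ne_eq, hr0, not_false_eq_true, if_true]
  rcases hp.eq_or_lt with rfl | hp0
  · -- `0 ^ (1 + θ)` vanishes only while `1 + θ ≠ 0`, hence the restriction to a neighbourhood.
    have h : (fun θ : ℝ => r * (0 / r) ^ (1 + θ)) =ᶠ[nhds 0] fun _ => 0 := by
      filter_upwards [lt_mem_nhds (show (-1 : ℝ) < 0 by norm_num)] with θ hθ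
      rw [zero_div, Real.zero_rpow (by linarith), mul_zero]
    simpa using (hasDerivAt_const (0 : ℝ) (0 : ℝ)).congr_of_eventuallyEq h
  · have hq : 0 < p / r := div_pos hp0 (lt_of_le_of_ne hr (Ne.symm hr0))
    have h := (((hasDerivAt_id (0 : ℝ)).const_add 1).const_rpow hq).const_mul r
    refine h.congr_deriv ?_
    rw [id, add_zero, Real.rpow_one]
    field_simp

theorem sum_mul_log_split {X Z : Type*} [Fintype X] [Fintype Z]
    {P : X × Z → ℝ} (hP : ∀ a, 0 ≤ P a) {R : Z → ℝ} (hsupp : ∀ z, margZ P z ≠ 0 → R z ≠ 0) :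
    ∑ xz : X × Z, P xz * Real.log (P xz / R xz.2) =
      (∑ xz : X × Z, if P xz ≠ 0 then P xz * Real.log (P xz / margZ P xz.2) else 0)
        + ∑ z, if margZ P z ≠ 0 then margZ P z * Real.log (margZ P z / R z) else 0 := by
  have hD : (∑ z, if margZ P z ≠ 0 then margZ P z * Real.log (margZ P z / R z) else 0)
      = ∑ xz : X × Z, P xz * Real.log (margZ P xz.2 / R xz.2) := by
    rw [Fintype.sum_prod_type_right]
    refine Finset.sum_congr rfl fun z _ => ?_
    simp only [← Finset.sum_mul]
    change _ = margZ P z * _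
    split_ifs with h
    · rfl
    · rw [not_not.mp h, zero_mul]
  rw [hD, ← Finset.sum_add_distrib]
  refine Finset.sum_congr rfl fun xz _ => ?_
  by_cases h : P xz = 0
  · simp [h]
  have hM : margZ P xz.2 ≠ 0 :=
    ((lt_of_le_of_ne (hP xz) (Ne.symm h)).trans_le (le_margZ hP xz)).ne'
  have hR := hsupp _ hM
  rw [if_pos h, Real.log_div h hR, Real.log_div h hM, Real.log_div hM hR]
  ring

/-- Limit of the conditional Rényi entropy at order 1:
`lim_{θ → 0⁺} H_{1+θ}(P_XZ|R_Z) = H(X|Z) - D(P_Z ∥ R_Z)`. -/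
theorem renyi_limit_at_one {X Z : Type*} [Fintype X] [Fintype Z]
    (P : X × Z → ℝ) (hP : IsDist P)
    (R : Z → ℝ) (hR : IsDist R)
    (hsupp : ∀ z, margZ P z ≠ 0 → R z ≠ 0) :
    Filter.Tendsto (fun θ => Hrenyi θ P R) (nhdsWithin 0 (Set.Ioi 0))
      (nhds
        ((- ∑ xz : X × Z,
            if P xz ≠ 0 then P xz * Real.log (P xz / margZ P xz.2) else 0)
          - ∑ z, if margZ P z ≠ 0 then margZ P z * Real.log (margZ P z / R z) else 0)) := by
  have hPR : ∀ xz : X × Z, P xz ≠ 0 → R xz.2 ≠ 0 := fun xz h =>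
    hsupp _ ((lt_of_le_of_ne (hP.1 xz) (Ne.symm h)).trans_le (le_margZ hP.1 xz)).ne'
  let S : ℝ → ℝ := fun θ => ∑ xz : X × Z,
    if R xz.2 ≠ 0 then R xz.2 * (P xz / R xz.2) ^ (1 + θ) else 0
  have hS : HasDerivAt S (∑ xz : X × Z, P xz * Real.log (P xz / R xz.2)) 0 :=
    HasDerivAt.fun_sum fun xz _ => hasDerivAt_renyiTerm (hP.1 xz) (hR.1 xz.2) (hPR xz)
  have hS0 : S 0 = 1 := by
    rw [← hP.2]
    refine Finset.sum_congr rfl fun xz _ => ?_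
    split_ifs with h
    · rw [add_zero, Real.rpow_one]
      field_simp
    · by_contra h'
      exact h (hPR xz (Ne.symm h'))
  have hlog := hS.log (by rw [hS0]; exact one_ne_zero)
  rw [hS0, div_one, sum_mul_log_split hP.1 hsupp] at hlog
  have hlim := (hlog.tendsto_slope_zero_right).neg
  rw [neg_add, ← sub_eq_add_neg] at hlim
  refine hlim.congr fun θ => ?_
  simp only [zero_add, hS0, Real.log_one, sub_zero, smul_eq_mul, Hrenyi, S, one_div, neg_mul]
end
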